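/- Let k ≥ 1 be an integer and let T be an invertible measure-preserving transformation of a standard probability space (X, ℬ, μ). Assume T is totally ergodic and there is a constant K > 1 such that for all measurable sets A, B, limsup_{n→∞} μ(T^{n^k} A ∩ B) ≤ K μ(A) μ(B). Then T is mixing along the sequence (n^k), i.e., μ(T^{n^k} A ∩ B) → μ(A)μ(B) as n → ∞ for all measurable A, B. -/

import Mathlib

open MeasureTheory Filter Set

lemma aux_rho_nsmul (ρ : ℤ → ℝ) (h0 : ρ 0 = 0) (hadd : ∀ a b, ρ (a + b) ≤ ρ a + ρ b)
    (n : ℕ) (a : ℤ) : ρ (n * a) ≤ n * ρ a := by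
  induction n with
  | zero => simp [h0]
  | succ n ih =>
    have := hadd (n * a) a
    push_cast
    rw [add_mul, one_mul, add_mul, one_mul]
    linarith

lemma aux_rho_sum (ρ : ℤ → ℝ) (h0 : ρ 0 = 0) (hadd : ∀ a b, ρ (a + b) ≤ ρ a + ρ b)
    {ι : Type*} (s : Finset ι) (f : ι → ℤ) : ρ (∑ i ∈ s, f i) ≤ ∑ i ∈ s, ρ (f i) := by
  classical
  induction s using Finset.induction_on with
  | empty => simp [h0]
  | insert a s ha ih =>
    rw [Finset.sum_insert ha, Finset.sum_insert ha]
    have := hadd (f a) (∑ i ∈ s, f i)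
    linarith

lemma aux_identity (k : ℕ) (hk : 1 ≤ k) (a b c : ℤ) (ha : a ≠ 0) :
    c * (k.factorial * a ^ k) = ∑ j ∈ Finset.range (k + 1),
      ((-1 : ℤ) ^ (k - j) * (k.choose j : ℤ)) * (c * (a * j + b) ^ k - c * b ^ k) := by
  have h1 : ((k.factorial : ℤ) * a ^ k) = ∑ j ∈ Finset.range (k + 1),
      ((-1 : ℤ) ^ (k - j) * (k.choose j : ℤ)) * ((a * j + b) ^ k) := by
    have hlin : (Polynomial.C a * Polynomial.X + Polynomial.C b).natDegree = 1 :=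
      Polynomial.natDegree_linear ha
    have hd : ((Polynomial.C a * Polynomial.X + Polynomial.C b) ^ k).natDegree = k := by
      rw [Polynomial.natDegree_pow, hlin, mul_one]
    have h := Polynomial.fwdDiff_iter_degree_eq_factorial
      ((Polynomial.C a * Polynomial.X + Polynomial.C b) ^ k)
    rw [hd, Polynomial.leadingCoeff_pow, Polynomial.leadingCoeff_linear ha] at h
    have h' := congrFun h 0
    rw [fwdDiff_iter_eq_sum_shift] at h'
    simp at h'
    rw [mul_comm, ← h']
  have h2 : (0 : ℤ) = ∑ j ∈ Finset.range (k + 1),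
      ((-1 : ℤ) ^ (k - j) * (k.choose j : ℤ)) := by
    have h := Polynomial.fwdDiff_iter_eq_zero_of_degree_lt (P := (1 : Polynomial ℤ)) (n := k)
      (by simp; omega)
    have h' := congrFun h 0
    rw [fwdDiff_iter_eq_sum_shift] at h'
    simp at h'
    rw [← h']
  simp only [mul_sub, Finset.sum_sub_distrib]
  rw [← Finset.sum_mul, ← h2, zero_mul, sub_zero, h1, Finset.mul_sum]
  exact Finset.sum_congr rfl fun j _ => by ring

lemma aux_recurrence (ρ : ℤ → ℝ) (h0 : ρ 0 = 0) (hnonneg : ∀ a, 0 ≤ ρ a)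
    (hneg : ∀ a, ρ (-a) = ρ a)
    (hadd : ∀ a b, ρ (a + b) ≤ ρ a + ρ b)
    (hpre : ∀ δ > 0, ∃ s : Finset ℤ, ∃ C : ℤ → s, ∀ a b, C a = C b → ρ (a - b) < δ)
    (k : ℕ) (hk : 1 ≤ k) (ε : ℝ) (hε : 0 < ε) (N : ℕ) :
    ∃ n : ℕ, N ≤ n ∧ ρ ((n ^ k : ℕ) : ℤ) < ε := by
  obtain ⟨s, C, hC⟩ := hpre (ε / 2 ^ (k + 1)) (by positivity)
  set c : ℤ := (N + 1) ^ k * k.factorial ^ (k - 1) with hc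
  obtain ⟨a, ha, b, col, hcol⟩ := Combinatorics.exists_mono_homothetic_copy
    ((Finset.range (k + 1)).image (fun j : ℕ => (j : ℤ))) (fun m : ℤ => C (c * m ^ k))
  have hcol' : ∀ j ∈ Finset.range (k + 1), C (c * ((a : ℤ) * j + b) ^ k) = col := by
    intro j hj
    have := hcol (j : ℤ) (Finset.mem_image_of_mem _ hj)
    simpa using this
  refine ⟨(N + 1) * k.factorial * a, ?_, ?_⟩
  · have : 0 < k.factorial := Nat.factorial_pos k
    calc N ≤ (N + 1) * 1 * 1 := by omega
      _ ≤ (N + 1) * k.factorial * a := by gcongr <;> omega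
  · have e : ((((N + 1) * k.factorial * a) ^ k : ℕ) : ℤ) = c * (k.factorial * (a : ℤ) ^ k) := by
      rw [hc]
      push_cast
      obtain ⟨k', rfl⟩ : ∃ k', k = k' + 1 := ⟨k - 1, by omega⟩
      simp only [Nat.add_sub_cancel, mul_pow]
      ring
    rw [e, aux_identity k hk a b c (by omega)]
    have hterm : ∀ j ∈ Finset.range (k + 1),
        ρ (((-1 : ℤ) ^ (k - j) * (k.choose j : ℤ)) * (c * (a * j + b) ^ k - c * b ^ k))
          ≤ (k.choose j : ℝ) * (ε / 2 ^ (k + 1)) := by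
      intro j hj
      have hb : C (c * b ^ k) = col := by
        have := hcol' 0 (by simp)
        simpa using this
      have h1 := (hC (c * ((a : ℤ) * j + b) ^ k) (c * b ^ k) ((hcol' j hj).trans hb.symm)).le
      have h2 : ∀ x : ℤ, ρ ((-1 : ℤ) ^ (k - j) * x) = ρ x := by
        intro x
        rcases neg_one_pow_eq_or ℤ (k - j) with h | h <;> rw [h] <;> simp [hneg]
      rw [mul_assoc, h2]
      refine (aux_rho_nsmul ρ h0 hadd _ _).trans ?_
      gcongr
    refine (aux_rho_sum ρ h0 hadd _ _).trans_lt ((Finset.sum_le_sum hterm).trans_lt ?_)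
    rw [← Finset.sum_mul]
    have : ∑ j ∈ Finset.range (k + 1), (k.choose j : ℝ) = 2 ^ k := by
      exact_mod_cast Nat.sum_range_choose k
    rw [this, pow_succ]
    have : (0:ℝ) < 2 ^ k := by positivity
    field_simp
    linarith

lemma aux_full_fiber
    (k : ℕ) (hk : 1 ≤ k)
    {X : Type*} [MeasurableSpace X]
    (μ : Measure X) [IsProbabilityMeasure μ] (T : X ≃ᵐ X)
    (hT : MeasurePreserving T μ μ)
    (herg : ∀ n : ℕ, n ≠ 0 → Ergodic ((⇑T)^[n]) μ)
    (K : ℝ)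
    (hbound : ∀ A B : Set X, MeasurableSet A → MeasurableSet B →
      Filter.limsup (fun n : ℕ => μ ((⇑T)^[n ^ k] '' A ∩ B)) atTop ≤
        ENNReal.ofReal K * (μ A * μ B))
    (D : X → X → ℝ) (hDm : Measurable (fun p : X × X => D p.1 p.2))
    (hD0 : ∀ x, D x x = 0) (hDnn : ∀ x y, 0 ≤ D x y) (hDs : ∀ x y, D x y = D y x)
    (hDt : ∀ x y z, D x z ≤ D x y + D y z)
    (hDT : ∀ x y, D (T x) (T y) = D x y)
    (hsep : ∀ ε > 0, ∃ A : Set X, μ A ≠ 0 ∧ ∀ x ∈ A, ∀ y ∈ A, D x y < ε) :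
    ∃ x₀, ∀ᵐ y ∂μ, D x₀ y = 0 := by
  have hball : ∀ x ε, MeasurableSet {y | D x y < ε} := fun x ε =>
    measurableSet_lt (hDm.comp measurable_prodMk_left) measurable_const
  let m : ℝ → X → ENNReal := fun ε x => μ {y | D x y < ε}
  have hm_meas : ∀ ε, Measurable (m ε) := fun ε =>
    measurable_measure_prodMk_left (measurableSet_lt hDm measurable_const)
  have hm_inv : ∀ ε x, m ε (T x) = m ε x := by
    intro ε x
    have := hT.measure_preimage (hball (T x) ε).nullMeasurableSet
    simp only [preimage_ofPred_eq, hDT] at this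
    exact this.symm
  have hpos : ∀ ε > 0, ∀ᵐ x ∂μ, 0 < m ε x := by
    intro ε hε
    obtain ⟨A, hA, hAD⟩ := hsep ε hε
    have hE := herg 1 one_ne_zero
    rw [Function.iterate_one] at hE
    rcases hE.toPreErgodic.ae_mem_or_ae_notMem (s := {x | 0 < m ε x})
      (measurableSet_lt measurable_const (hm_meas ε)) (by ext x; simp [hm_inv]) with h | h
    · exact h
    · exfalso
      apply hA
      refine measure_mono_null ?_ h
      intro x hx
      simp only [mem_compl_iff, mem_ofPred_eq, not_not]
      exact (pos_iff_ne_zero.2 hA).trans_le (measure_mono fun y hy => hAD x hx y hy)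
  have hall : ∀ᵐ x ∂μ, ∀ n : ℕ, 0 < m (1 / (n + 1)) x :=
    ae_all_iff.2 fun n => hpos _ (by positivity)
  obtain ⟨x₀, hx₀⟩ := hall.exists
  have hx₀' : ∀ ε > 0, 0 < m ε x₀ := by
    intro ε hε
    obtain ⟨n, hn⟩ := exists_nat_one_div_lt hε
    exact (hx₀ n).trans_le (measure_mono fun y (hy : D x₀ y < _) => hy.trans hn)
  refine ⟨x₀, ?_⟩
  let τ : Equiv.Perm X := T.toEquiv
  have hτ1 : ∀ x, τ x = T x := fun x => rfl
  have hinvZ : ∀ (g : X → X → ℝ), (∀ x y, g (T x) (T y) = g x y) → ∀ (j : ℤ) x y,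
      g ((τ ^ j) x) ((τ ^ j) y) = g x y := by
    intro g hg j
    induction j using Int.induction_on with
    | zero => simp
    | succ i ih => intro x y; rw [zpow_add_one, Equiv.Perm.mul_apply, Equiv.Perm.mul_apply, ih,
        hτ1, hτ1, hg]
    | pred i ih =>
      intro x y
      rw [zpow_sub_one, Equiv.Perm.mul_apply, Equiv.Perm.mul_apply, ih, ← hg]
      simp [← hτ1]
  have hDτ := hinvZ D hDT
  have hmτ : ∀ ε (j : ℤ) x, m ε ((τ ^ j) x) = m ε x := by
    intro ε j x
    have := hinvZ (fun x _ => (m ε x).toReal) (fun x _ => by rw [hm_inv]) j x x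
    exact (ENNReal.toReal_eq_toReal_iff' (measure_ne_top _ _) (measure_ne_top _ _)).1 this
  let ρ : ℤ → ℝ := fun j => D ((τ ^ j) x₀) x₀
  have hρab : ∀ a b : ℤ, ρ (a - b) = D ((τ ^ a) x₀) ((τ ^ b) x₀) := by
    intro a b
    have := hDτ b ((τ ^ (a - b)) x₀) x₀
    rw [← Equiv.Perm.mul_apply, ← zpow_add] at this
    simp only [ρ]
    rw [← this]
    congr 3
    ring
  have hpre : ∀ δ > 0, ∃ s : Finset ℤ, ∃ C : ℤ → s, ∀ a b, C a = C b → ρ (a - b) < δ := by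
    intro δ hδ
    have : ∃ s : Finset ℤ, ∀ a : ℤ, ∃ j ∈ s, D ((τ ^ j) x₀) ((τ ^ a) x₀) < δ / 2 := by
      by_contra! hcon
      obtain ⟨f, -, hf⟩ := exists_seq_of_forall_finset_exists (fun _ : ℤ => True)
        (fun j a => δ / 2 ≤ D ((τ ^ j) x₀) ((τ ^ a) x₀))
        (fun s _ => by
          obtain ⟨a, ha⟩ := hcon s
          exact ⟨a, trivial, ha⟩)
      have hfin := Measure.finite_const_le_meas_of_disjoint_iUnion μ (ε := m (δ / 4) x₀)
        (hx₀' _ (by positivity)) (As := fun i : ℕ => {y | D ((τ ^ (f i)) x₀) y < δ / 4})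
        (fun i => hball _ _) (by
          have key : ∀ i j, i < j → Disjoint {y | D ((τ ^ (f i)) x₀) y < δ / 4}
              {y | D ((τ ^ (f j)) x₀) y < δ / 4} := by
            intro i j hij
            rw [Set.disjoint_left]
            intro y h1 h2
            simp only [mem_ofPred_eq] at h1 h2
            have h3 := hf i j hij
            have h4 := hDt ((τ ^ (f i)) x₀) y ((τ ^ (f j)) x₀)
            rw [hDs y] at h4
            linarith
          intro i j hij
          rcases lt_or_gt_of_ne hij with h | h
          · exact key i j h
          · exact (key j i h).symm) (measure_ne_top _ _)
      apply Set.infinite_univ (α := ℕ)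
      refine hfin.subset ?_
      intro i _
      exact (hmτ (δ / 4) (f i) x₀).ge
    obtain ⟨s, hs⟩ := this
    choose c hc hcd using hs
    refine ⟨s, fun a => ⟨c a, hc a⟩, ?_⟩
    intro a b hab
    have hab' : c a = c b := congrArg Subtype.val hab
    rw [hρab]
    have h1 := hcd a
    have h2 := hcd b
    rw [← hab'] at h2
    have h3 := hDt ((τ ^ a) x₀) ((τ ^ (c a)) x₀) ((τ ^ b) x₀)
    rw [hDs ((τ ^ a) x₀) ((τ ^ (c a)) x₀)] at h3
    linarith
  have hrec := aux_recurrence ρ (by simp [ρ, hD0]) (fun a => hDnn _ _)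
    (fun a => by
      have h1 := hρab 0 a
      have h2 : ρ a = D ((τ ^ a) x₀) x₀ := rfl
      rw [zero_sub] at h1
      rw [h1, h2, hDs]; simp)
    (fun a b => by
      have h1 := hρab a (-b)
      rw [sub_neg_eq_add] at h1
      have h2 := hρab 0 (-b)
      rw [zero_sub, neg_neg] at h2
      have h3 : ρ a = D ((τ ^ a) x₀) x₀ := rfl
      rw [h1, h2, h3]
      simpa using hDt ((τ ^ a) x₀) x₀ ((τ ^ (-b)) x₀))
    hpre k hk
  have hiter : ∀ (n : ℕ) x, (τ ^ (n : ℤ)) x = (⇑T)^[n] x := by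
    intro n x
    rw [zpow_natCast, Equiv.Perm.coe_pow]
    rfl
  have hlow : ∀ ε > 0, 1 ≤ ENNReal.ofReal K * m ε x₀ := by
    intro ε hε
    have hb := hbound {y | D x₀ y < ε / 2} {y | D x₀ y < ε} (hball _ _) (hball _ _)
    have hfreq : ∃ᶠ n : ℕ in atTop, m (ε / 2) x₀ ≤
        μ ((⇑T)^[n ^ k] '' {y | D x₀ y < ε / 2} ∩ {y | D x₀ y < ε}) := by
      rw [frequently_atTop]
      intro N
      obtain ⟨n, hn, hρ⟩ := hrec (ε / 2) (by positivity) N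
      refine ⟨n, hn, ?_⟩
      have hsub : (⇑T)^[n ^ k] '' {y | D x₀ y < ε / 2} ⊆ {y | D x₀ y < ε} := by
        rintro _ ⟨y, hy, rfl⟩
        simp only [mem_ofPred_eq] at hy ⊢
        have h1 : D ((τ ^ ((n ^ k : ℕ) : ℤ)) x₀) x₀ < ε / 2 := hρ
        have h2 := hDτ ((n ^ k : ℕ) : ℤ) x₀ y
        rw [hiter] at h1
        rw [hiter, hiter] at h2
        have h3 := hDt x₀ ((⇑T)^[n ^ k] x₀) ((⇑T)^[n ^ k] y)
        rw [hDs x₀ ((⇑T)^[n ^ k] x₀)] at h3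
        linarith
      rw [inter_eq_left.2 hsub]
      have hinj : Function.Injective ((⇑T)^[n ^ k]) := T.injective.iterate _
      calc m (ε / 2) x₀ ≤ μ ((⇑T)^[n ^ k] ⁻¹' ((⇑T)^[n ^ k] '' {y | D x₀ y < ε / 2})) := by
            rw [preimage_image_eq _ hinj]
        _ ≤ _ := (hT.iterate _).measure_preimage_le _
    have h1 : m (ε / 2) x₀ ≤ ENNReal.ofReal K * (m (ε / 2) x₀ * m ε x₀) :=
      (le_limsup_of_frequently_le hfreq).trans hb
    have h2 : m (ε / 2) x₀ ≠ 0 := (hx₀' _ (by positivity)).ne'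
    have h3 : m (ε / 2) x₀ ≠ ⊤ := measure_ne_top _ _
    rw [mul_left_comm] at h1
    exact (ENNReal.mul_le_mul_iff_right h2 h3).1 (by rwa [mul_one])
  set Y : Set X := {y | D x₀ y = 0} with hY
  have hYm : MeasurableSet Y :=
    measurableSet_eq_fun (hDm.comp measurable_prodMk_left) measurable_const
  have hYeq : Y = ⋂ n : ℕ, {y | D x₀ y < 1 / ((n : ℝ) + 1)} := by
    ext y
    simp only [hY, mem_ofPred_eq, mem_iInter]
    constructor
    · intro h n; rw [h]; positivity
    · intro h
      by_contra hne
      have : 0 < D x₀ y := lt_of_le_of_ne (hDnn _ _) (Ne.symm hne)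
      obtain ⟨n, hn⟩ := exists_nat_one_div_lt this
      exact absurd (h n) hn.le.not_gt
  have hYpos : μ Y ≠ 0 := by
    have hlim : Tendsto (fun n : ℕ => μ {y | D x₀ y < 1 / ((n : ℝ) + 1)}) atTop (nhds (μ Y)) := by
      rw [hYeq]
      refine tendsto_measure_iInter_atTop (fun n => (hball _ _).nullMeasurableSet) ?_
        ⟨0, measure_ne_top _ _⟩
      intro i j hij y (hy : D x₀ y < _)
      exact hy.trans_le (Nat.one_div_le_one_div hij)
    have hlim2 := ENNReal.Tendsto.const_mul (a := ENNReal.ofReal K) hlim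
      (Or.inr ENNReal.ofReal_ne_top)
    have hge : 1 ≤ ENNReal.ofReal K * μ Y :=
      ge_of_tendsto' hlim2 fun n => hlow _ (by positivity)
    intro h0
    rw [h0, mul_zero] at hge
    exact absurd hge (by simp)
  obtain ⟨x, hx, j, hj, hjx⟩ := hT.exists_mem_iterate_mem hYm.nullMeasurableSet hYpos
  have hDj : ∀ x y, D ((⇑T)^[j] x) ((⇑T)^[j] y) = D x y := by
    intro x y
    rw [← hiter, ← hiter, hDτ]
  have hYinv : (⇑T)^[j] ⁻¹' Y = Y := by
    ext y
    simp only [hY, mem_preimage, mem_ofPred_eq] at hx hjx ⊢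
    constructor
    · intro h
      refine le_antisymm ?_ (hDnn _ _)
      have h1 := hDt x₀ x y
      have h2 := hDt ((⇑T)^[j] x) x₀ ((⇑T)^[j] y)
      rw [hDj, hDs _ x₀] at h2
      linarith
    · intro h
      refine le_antisymm ?_ (hDnn _ _)
      have h1 := hDt x₀ ((⇑T)^[j] x) ((⇑T)^[j] y)
      have h2 := hDt x x₀ y
      rw [hDj] at h1
      rw [hDs _ x₀] at h2
      linarith
  rcases (herg j hj).toPreErgodic.measure_self_or_compl_eq_zero hYm hYinv with h | h
  · exact absurd h hYpos
  · exact h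

lemma aux_prod_ergodic
    (k : ℕ) (hk : 1 ≤ k)
    {X : Type*} [MeasurableSpace X] [StandardBorelSpace X]
    (μ : Measure X) [IsProbabilityMeasure μ] (T : X ≃ᵐ X)
    (hT : MeasurePreserving T μ μ)
    (herg : ∀ n : ℕ, n ≠ 0 → Ergodic ((⇑T)^[n]) μ)
    (K : ℝ)
    (hbound : ∀ A B : Set X, MeasurableSet A → MeasurableSet B →
      Filter.limsup (fun n : ℕ => μ ((⇑T)^[n ^ k] '' A ∩ B)) atTop ≤
        ENNReal.ofReal K * (μ A * μ B)) :
    Ergodic (Prod.map T T) (μ.prod μ) := by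
  refine ⟨hT.prod hT, ⟨?_⟩⟩
  intro s hs hinv
  let E : X → Set X := fun x => Prod.mk x ⁻¹' s
  have hEm : ∀ x, MeasurableSet (E x) := fun x => measurable_prodMk_left hs
  have hET : ∀ x, ⇑T ⁻¹' (E (T x)) = E x := by
    intro x
    ext y
    have : (x, y) ∈ Prod.map T T ⁻¹' s ↔ (x, y) ∈ s := by rw [hinv]
    simpa [E] using this
  let D : X → X → ℝ := fun x y => μ.real (symmDiff (E x) (E y))
  have hDT : ∀ x y, D (T x) (T y) = D x y := by
    intro x y
    simp only [D, measureReal_def]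
    rw [← hET x, ← hET y, ← Set.preimage_symmDiff,
      hT.measure_preimage ((hEm _).symmDiff (hEm _)).nullMeasurableSet]
  have hDt : ∀ x y z, D x z ≤ D x y + D y z := by
    intro x y z
    exact (measureReal_mono (symmDiff_triangle (E x) (E y) (E z))).trans
      (measureReal_union_le _ _)
  have hDs : ∀ x y, D x y = D y x := fun x y => by simp only [D, symmDiff_comm]
  have hDm : Measurable (fun p : X × X => D p.1 p.2) := by
    have hW : MeasurableSet (symmDiff {q : (X × X) × X | (q.1.1, q.2) ∈ s}
        {q : (X × X) × X | (q.1.2, q.2) ∈ s}) := by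
      apply MeasurableSet.symmDiff
      · exact (show Measurable (fun q : (X × X) × X => (q.1.1, q.2)) by fun_prop) hs
      · exact (show Measurable (fun q : (X × X) × X => (q.1.2, q.2)) by fun_prop) hs
    exact (measurable_measure_prodMk_left (ν := μ) hW).ennreal_toReal
  have hsep : ∀ ε > 0, ∃ A : Set X, μ A ≠ 0 ∧ ∀ x ∈ A, ∀ y ∈ A, D x y < ε := by
    intro ε hε
    obtain ⟨𝒜, hc, hd⟩ := exists_countable_measureDense μ
    by_contra! hcon
    have hnull : ∀ t ∈ 𝒜, μ {x | μ (symmDiff (E x) t) < ENNReal.ofReal (ε / 2)} = 0 := by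
      intro t ht
      by_contra hne
      obtain ⟨x, hx, y, hy, hxy⟩ := hcon _ hne
      refine absurd hxy (not_le.2 ?_)
      have h : ∀ z, μ (symmDiff (E z) t) < ENNReal.ofReal (ε / 2) →
          μ.real (symmDiff (E z) t) < ε / 2 := by
        intro z hz
        exact (ENNReal.lt_ofReal_iff_toReal_lt (measure_ne_top _ _)).1 hz
      have h1 := h x hx
      have h2 := h y hy
      have h3 : D x y ≤ μ.real (symmDiff (E x) t) + μ.real (symmDiff t (E y)) :=
        (measureReal_mono (symmDiff_triangle (E x) t (E y))).trans (measureReal_union_le _ _)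
      rw [symmDiff_comm t] at h3
      linarith
    have hun : μ (⋃ t ∈ 𝒜, {x | μ (symmDiff (E x) t) < ENNReal.ofReal (ε / 2)}) = 0 :=
      (measure_biUnion_null_iff hc).2 hnull
    have huniv : (⋃ t ∈ 𝒜, {x | μ (symmDiff (E x) t) < ENNReal.ofReal (ε / 2)}) = univ := by
      rw [eq_univ_iff_forall]
      intro x
      obtain ⟨t, ht, h⟩ := hd.approx (E x) (hEm x) (measure_ne_top _ _) (ε / 2) (by positivity)
      exact mem_biUnion ht h
    rw [huniv] at hun
    simp at hun
  obtain ⟨x₀, hx₀⟩ := aux_full_fiber k hk μ T hT herg K hbound D hDm (fun x => by simp [D])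
    (fun x y => measureReal_nonneg) hDs hDt hDT hsep
  have hD0 : ∀ x y, D x y = 0 → E x =ᵐ[μ] E y := by
    intro x y h
    rw [← measure_symmDiff_eq_zero_iff]
    simpa [D, measureReal_def, ENNReal.toReal_eq_zero_iff] using h
  have hSinv : ⇑T ⁻¹' (E x₀) =ᵐ[μ] E x₀ := by
    obtain ⟨y, h1, h2⟩ := (hx₀.and (hT.quasiMeasurePreserving.ae hx₀)).exists
    have h3 : ⇑T ⁻¹' (E x₀) =ᵐ[μ] ⇑T ⁻¹' (E (T y)) :=
      hT.quasiMeasurePreserving.preimage_ae_eq (hD0 _ _ h2)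
    rw [hET] at h3
    exact h3.trans (hD0 _ _ h1).symm
  have hE1 := herg 1 one_ne_zero
  rw [Function.iterate_one] at hE1
  rw [eventuallyConst_set']
  rcases hE1.quasiErgodic.ae_empty_or_univ₀ (hEm x₀).nullMeasurableSet hSinv with h | h
  · left
    rw [ae_eq_empty, Measure.measure_prod_null hs]
    filter_upwards [hx₀] with y hy
    exact ae_eq_empty.1 ((hD0 _ _ hy).symm.trans h)
  · right
    rw [ae_eq_univ, Measure.measure_prod_null hs.compl]
    filter_upwards [hx₀] with y hy
    exact ae_eq_univ.1 ((hD0 _ _ hy).symm.trans h)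

/-- Finite ergodic averages of the indicator of a set. -/
noncomputable def auxAvg {Ω : Type*} (f : Ω → Ω) (R : Set Ω) (N : ℕ) (ω : Ω) : ℝ :=
  (N : ℝ)⁻¹ * ∑ j ∈ Finset.range N, R.indicator (fun _ => (1 : ℝ)) (f^[j] ω)

lemma auxAvg_measurable {Ω : Type*} [MeasurableSpace Ω] {f : Ω → Ω} (hf : Measurable f)
    {R : Set Ω} (hR : MeasurableSet R) (N : ℕ) : Measurable (auxAvg f R N) := by
  unfold auxAvg
  refine measurable_const.mul (Finset.measurable_sum _ fun j _ => ?_)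
  exact (measurable_const.indicator hR).comp (hf.iterate j)

lemma aux_ind_int {Ω : Type*} [MeasurableSpace Ω] {ν : Measure Ω} [IsProbabilityMeasure ν]
    {f : Ω → Ω} (hf : Measurable f) {R : Set Ω} (hR : MeasurableSet R) (j : ℕ) :
    Integrable (fun ω => R.indicator (fun _ => (1 : ℝ)) (f^[j] ω)) ν := by
  have : (fun ω => R.indicator (fun _ => (1 : ℝ)) (f^[j] ω)) =
      (f^[j] ⁻¹' R).indicator (fun _ => (1 : ℝ)) := by
    rfl
  rw [this]
  exact (integrable_const _).indicator (hf.iterate j hR)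

lemma auxAvg_integrable {Ω : Type*} [MeasurableSpace Ω] {ν : Measure Ω} [IsProbabilityMeasure ν]
    {f : Ω → Ω} (hf : Measurable f) {R : Set Ω} (hR : MeasurableSet R) (N : ℕ) :
    Integrable (auxAvg f R N) ν := by
  unfold auxAvg
  exact (integrable_finsetSum _ fun j _ => aux_ind_int hf hR j).const_mul _

lemma auxAvg_integral {Ω : Type*} [MeasurableSpace Ω] {ν : Measure Ω} [IsProbabilityMeasure ν]
    {f : Ω → Ω} (hf : MeasurePreserving f ν ν) {R : Set Ω} (hR : MeasurableSet R) (N : ℕ)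
    (hN : N ≠ 0) : ∫ ω, auxAvg f R N ω ∂ν = ν.real R := by
  unfold auxAvg
  rw [integral_const_mul, integral_finsetSum _ fun j _ => aux_ind_int hf.measurable hR j]
  have : ∀ j ∈ Finset.range N,
      ∫ ω, R.indicator (fun _ => (1 : ℝ)) (f^[j] ω) ∂ν = ν.real R := by
    intro j _
    have e : (fun ω => R.indicator (fun _ => (1 : ℝ)) (f^[j] ω)) =
        (f^[j] ⁻¹' R).indicator (fun _ => (1 : ℝ)) := by
      rfl
    rw [e, integral_indicator (hf.measurable.iterate j hR)]
    simp [measureReal_def, (hf.iterate j).measure_preimage hR.nullMeasurableSet]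
  rw [Finset.sum_congr rfl this]
  simp
  field_simp

lemma aux_mean_ergodic {Ω : Type*} [MeasurableSpace Ω] (ν : Measure Ω) [IsProbabilityMeasure ν]
    (f : Ω → Ω) (hf : Ergodic f ν) (R : Set Ω) (hR : MeasurableSet R) :
    Tendsto (fun N : ℕ => ∫⁻ ω, ‖auxAvg f R N ω - ν.real R‖ₑ ∂ν) atTop (nhds 0) := by
  have hmp : MeasurePreserving f ν ν := hf.toMeasurePreserving
  let U : Lp ℝ 2 ν →L[ℝ] Lp ℝ 2 ν :=
    (Lp.compMeasurePreservingₗᵢ ℝ f hmp).toContinuousLinearMap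
  have hU : ‖U‖ ≤ 1 := LinearIsometry.norm_toContinuousLinearMap_le _
  let x : Lp ℝ 2 ν := indicatorConstLp 2 hR (measure_ne_top ν R) (1 : ℝ)
  have hlim := U.tendsto_birkhoffAverage_orthogonalProjection hU x
  set P := (U.eqLocus (1 : Lp ℝ 2 ν →L[ℝ] Lp ℝ 2 ν)).orthogonalProjectionOnto x with hP
  obtain ⟨c, hc⟩ : ∃ c : ℝ, ((P : Lp ℝ 2 ν) : Ω → ℝ) =ᵐ[ν] Function.const Ω c := by
    apply hf.ae_eq_const_of_ae_eq_comp_ae (Lp.aestronglyMeasurable _)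
    have h1 : U (P : Lp ℝ 2 ν) = P := P.2
    have h2 := Lp.coeFn_compMeasurePreserving (P : Lp ℝ 2 ν) hmp
    have h3 : Lp.compMeasurePreserving f hmp (P : Lp ℝ 2 ν) = P := h1
    rw [h3] at h2
    exact h2.symm
  have hcoe : ∀ N : ℕ, ((birkhoffAverage ℝ U _root_.id N x : Lp ℝ 2 ν) : Ω → ℝ) =ᵐ[ν]
      auxAvg f R N := by
    intro N
    have h1 : ∀ j : ℕ, ((U^[j] x : Lp ℝ 2 ν) : Ω → ℝ) =ᵐ[ν]
        fun ω => R.indicator (fun _ => (1 : ℝ)) (f^[j] ω) := by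
      intro j
      have e : U^[j] x = Lp.compMeasurePreserving f^[j] (hmp.iterate j) x :=
        congrFun (Lp.compMeasurePreserving_iterate (E := ℝ) (p := 2) hmp j) x
      rw [e]
      have h2 := Lp.coeFn_compMeasurePreserving x (hmp.iterate j)
      have h3 : (x : Ω → ℝ) =ᵐ[ν] R.indicator fun _ => (1 : ℝ) := indicatorConstLp_coeFn
      exact h2.trans ((hmp.iterate j).quasiMeasurePreserving.ae_eq_comp h3)
    simp only [birkhoffAverage, birkhoffSum, _root_.id]
    refine (Lp.coeFn_smul _ _).trans ?_
    have h4 := Lp.coeFn_finsetSum (Finset.range N) (fun j => (U^[j] x : Lp ℝ 2 ν))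
    have h5 : ∀ᵐ ω ∂ν, ∀ j : ℕ, ((U^[j] x : Lp ℝ 2 ν) : Ω → ℝ) ω =
        R.indicator (fun _ => (1 : ℝ)) (f^[j] ω) := ae_all_iff.2 h1
    filter_upwards [h4, h5] with ω h6 h7
    simp only [Pi.smul_apply, smul_eq_mul, auxAvg]
    rw [h6]
    simp [h7]
  have hconv : Tendsto (fun N : ℕ => ∫⁻ ω, ‖auxAvg f R N ω - c‖ₑ ∂ν) atTop (nhds 0) := by
    have h1 : Tendsto (fun N : ℕ => ‖(birkhoffAverage ℝ U _root_.id N x : Lp ℝ 2 ν) - P‖ₑ)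
        atTop (nhds 0) := by
      have := tendsto_iff_edist_tendsto_0.1 hlim
      simpa [edist_eq_enorm_sub] using this
    refine tendsto_of_tendsto_of_tendsto_of_le_of_le tendsto_const_nhds h1
      (fun _ => zero_le) ?_
    intro N
    have h2 : ((birkhoffAverage ℝ U _root_.id N x - P : Lp ℝ 2 ν) : Ω → ℝ) =ᵐ[ν]
        fun ω => auxAvg f R N ω - c := by
      filter_upwards [Lp.coeFn_sub (birkhoffAverage ℝ U _root_.id N x) (P : Lp ℝ 2 ν), hcoe N, hc]
        with ω h3 h4 h5
      rw [h3, Pi.sub_apply, h4, h5]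
      rfl
    show ∫⁻ ω, ‖auxAvg f R N ω - c‖ₑ ∂ν ≤ ‖(birkhoffAverage ℝ U _root_.id N x : Lp ℝ 2 ν) - P‖ₑ
    rw [Lp.enorm_def, eLpNorm_congr_ae h2, ← eLpNorm_one_eq_lintegral_enorm]
    exact eLpNorm_le_eLpNorm_of_exponent_le (by norm_num)
      ((auxAvg_measurable hmp.measurable hR N).sub_const c).aestronglyMeasurable
  have hbd : ∀ᶠ N : ℕ in atTop, ∫⁻ ω, ‖auxAvg f R N ω - ν.real R‖ₑ ∂ν ≤
      2 * ∫⁻ ω, ‖auxAvg f R N ω - c‖ₑ ∂ν := by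
    filter_upwards [eventually_ne_atTop 0] with N hN
    have hmeas : Measurable (fun ω => ‖auxAvg f R N ω - c‖ₑ) :=
      ((auxAvg_measurable hmp.measurable hR N).sub_const c).enorm
    have h1 : ‖c - ν.real R‖ₑ ≤ ∫⁻ ω, ‖auxAvg f R N ω - c‖ₑ ∂ν := by
      have : ∫ ω, (auxAvg f R N ω - c) ∂ν = ν.real R - c := by
        rw [integral_sub (auxAvg_integrable hmp.measurable hR N) (integrable_const _),
          auxAvg_integral hmp hR N hN]
        simp
      rw [← enorm_neg, neg_sub, ← this]
      exact enorm_integral_le_lintegral_enorm _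
    calc ∫⁻ ω, ‖auxAvg f R N ω - ν.real R‖ₑ ∂ν
        ≤ ∫⁻ ω, (‖auxAvg f R N ω - c‖ₑ + ‖c - ν.real R‖ₑ) ∂ν := by
          refine lintegral_mono fun ω => ?_
          have e : auxAvg f R N ω - ν.real R = (auxAvg f R N ω - c) + (c - ν.real R) := by ring
          rw [e]
          exact enorm_add_le _ _
      _ = ∫⁻ ω, ‖auxAvg f R N ω - c‖ₑ ∂ν + ‖c - ν.real R‖ₑ := by
          rw [lintegral_add_left hmeas]; simp
      _ ≤ _ := by rw [two_mul]; gcongr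
  have h2 : Tendsto (fun N : ℕ => 2 * ∫⁻ ω, ‖auxAvg f R N ω - c‖ₑ ∂ν) atTop (nhds 0) := by
    simpa using ENNReal.Tendsto.const_mul (a := 2) hconv (Or.inr (by simp))
  exact tendsto_of_tendsto_of_tendsto_of_le_of_le' tendsto_const_nhds h2
    (Eventually.of_forall fun _ => zero_le) hbd

lemma aux_limsup_add (u v : ℕ → ENNReal) :
    limsup (fun n => u n + v n) atTop ≤ limsup u atTop + limsup v atTop := by
  refine ENNReal.le_of_forall_pos_le_add fun ε hε hfin => ?_
  have hu : limsup u atTop ≠ ⊤ := (le_self_add.trans_lt hfin).ne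
  have hv : limsup v atTop ≠ ⊤ := (le_add_self.trans_lt hfin).ne
  have hε2 : (ε : ENNReal) / 2 ≠ 0 := by simpa using hε.ne'
  have h1 := eventually_lt_of_limsup_lt (ENNReal.lt_add_right hu hε2)
  have h2 := eventually_lt_of_limsup_lt (ENNReal.lt_add_right hv hε2)
  refine limsup_le_of_le (h := ?_)
  filter_upwards [h1, h2] with n h3 h4
  calc u n + v n ≤ (limsup u atTop + (ε : ENNReal) / 2) + (limsup v atTop + (ε : ENNReal) / 2) :=
        add_le_add h3.le h4.le
    _ = limsup u atTop + limsup v atTop + ((ε : ENNReal) / 2 + (ε : ENNReal) / 2) := by ring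
    _ = _ := by rw [ENNReal.add_halves]

lemma aux_limsup_sum {ι : Type*} (s : Finset ι) (w b : ι → ENNReal) (hw : ∀ i, w i ≠ ⊤)
    (u : ι → ℕ → ENNReal) (h : ∀ i, limsup (u i) atTop ≤ b i) :
    limsup (fun n => ∑ i ∈ s, w i * u i n) atTop ≤ ∑ i ∈ s, w i * b i := by
  classical
  induction s using Finset.induction_on with
  | empty => simp
  | insert a s ha ih =>
    simp only [Finset.sum_insert ha]
    refine (aux_limsup_add (fun n => w a * u a n) (fun n => ∑ i ∈ s, w i * u i n)).trans ?_
    rw [ENNReal.limsup_const_mul_of_ne_top (hw a)]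
    exact add_le_add (mul_le_mul_right (h a) _) ih

lemma aux_lintegral_fin {Ω γ : Type*} [MeasurableSpace Ω] (ν : Measure Ω) [Fintype γ]
    [MeasurableSpace γ] [MeasurableSingletonClass γ] (p : Ω → γ) (hp : Measurable p)
    (G : γ → ENNReal) : ∫⁻ ω, G (p ω) ∂ν = ∑ c, G c * ν (p ⁻¹' {c}) := by
  rw [← lintegral_map (measurable_of_finite G) hp, lintegral_fintype]
  refine Finset.sum_congr rfl fun c _ => ?_
  rw [Measure.map_apply hp (measurableSet_singleton c)]

/-- if `T` is a totally ergodic invertible measure-preserving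
transformation of a standard probability space and
`limsup μ(T^{n^k} A ∩ B) ≤ K μ(A)μ(B)` for some constant `K > 1`, then `T` is mixing
along the sequence `(n^k)`. -/
theorem mixing_along_powers_of_totallyErgodic_of_limsup_le
    (k : ℕ) (hk : 1 ≤ k)
    {X : Type*} [MeasurableSpace X] [StandardBorelSpace X]
    (μ : Measure X) [IsProbabilityMeasure μ] (T : X ≃ᵐ X)
    (hT : MeasurePreserving T μ μ)
    (herg : ∀ n : ℕ, n ≠ 0 → Ergodic ((⇑T)^[n]) μ ∧ Ergodic ((⇑T.symm)^[n]) μ)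
    (K : ℝ) (hK : 1 < K)
    (hbound : ∀ A B : Set X, MeasurableSet A → MeasurableSet B →
      Filter.limsup (fun n : ℕ => μ ((⇑T)^[n ^ k] '' A ∩ B)) atTop ≤
        ENNReal.ofReal K * (μ A * μ B)) :
    ∀ A B : Set X, MeasurableSet A → MeasurableSet B →
      Tendsto (fun n : ℕ => μ ((⇑T)^[n ^ k] '' A ∩ B)) atTop (nhds (μ A * μ B)) := by
  intro A B hA hB
  have hergT : ∀ n : ℕ, n ≠ 0 → Ergodic ((⇑T)^[n]) μ := fun n hn => (herg n hn).1
  have hprod := aux_prod_ergodic k hk μ T hT hergT K hbound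
  have hR : MeasurableSet (A ×ˢ B) := hA.prod hB
  have hmean := aux_mean_ergodic (μ.prod μ) (Prod.map T T) hprod (A ×ˢ B) hR
  set c : ℝ := (μ.prod μ).real (A ×ˢ B) with hc
  have hcAB : c = (μ A * μ B).toReal := by rw [hc, measureReal_def, Measure.prod_prod]
  have hfin : μ A * μ B ≠ ⊤ := ENNReal.mul_ne_top (measure_ne_top _ _) (measure_ne_top _ _)
  -- the inverse of iterates
  let S : ℕ → X → X := fun n => (⇑T.symm)^[n]
  have hSm : ∀ n, Measurable (S n) := fun n => T.symm.measurable.iterate n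
  have himg : ∀ n (A : Set X), (⇑T)^[n] '' A = S n ⁻¹' A := by
    intro n A
    refine congrFun (Set.image_eq_preimage_of_inverse ?_ ?_) A
    · exact Function.LeftInverse.iterate T.symm_apply_apply n
    · exact Function.RightInverse.iterate T.apply_symm_apply n
  have hcomm : ∀ n j x, (⇑T)^[j] (S n x) = S n ((⇑T)^[j] x) := by
    intro n j x
    have h : Function.Commute (⇑T) (⇑T.symm) := fun x => by simp
    exact h.iterate_iterate j n x
  rw [← ENNReal.tendsto_toReal_iff (fun n => measure_ne_top _ _) hfin, ← hcAB]
  rw [EMetric.tendsto_nhds]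
  intro ε hε
  have hmeanK : Tendsto (fun N : ℕ => ENNReal.ofReal K *
      ∫⁻ ω, ‖auxAvg (Prod.map T T) (A ×ˢ B) N ω - c‖ₑ ∂(μ.prod μ)) atTop (nhds 0) := by
    simpa using ENNReal.Tendsto.const_mul (a := ENNReal.ofReal K) hmean
      (Or.inr ENNReal.ofReal_ne_top)
  obtain ⟨J, hJlt, hJ⟩ := ((hmeanK.eventually_lt_const hε).and (eventually_ne_atTop 0)).exists
  -- finite coding
  classical
  let code : Set X → X → (Fin J → Prop) := fun A x j => (⇑T)^[j] x ∈ A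
  have hcode : ∀ A, MeasurableSet A → Measurable (code A) := by
    intro A hA
    refine measurable_pi_iff.2 fun j => ?_
    exact measurableSet_setOfPred.1 (T.measurable.iterate j hA)
  let F : (Fin J → Prop) × (Fin J → Prop) → ℝ := fun q =>
    (J : ℝ)⁻¹ * ∑ j : Fin J, if q.1 j ∧ q.2 j then 1 else 0
  let G : (Fin J → Prop) × (Fin J → Prop) → ENNReal := fun q => ‖F q - c‖ₑ
  have hF : ∀ x y, F (code A x, code B y) = auxAvg (Prod.map T T) (A ×ˢ B) J (x, y) := by
    intro x y
    simp only [F, auxAvg, code]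
    rw [Finset.sum_range]
    congr 1
    refine Finset.sum_congr rfl fun j _ => ?_
    rw [Prod.map_iterate]
    simp [Set.indicator]
  have hGprod : ∫⁻ ω, ‖auxAvg (Prod.map T T) (A ×ˢ B) J ω - c‖ₑ ∂(μ.prod μ) =
      ∑ q, G q * (μ (code A ⁻¹' {q.1}) * μ (code B ⁻¹' {q.2})) := by
    have hp : Measurable (fun ω : X × X => (code A ω.1, code B ω.2)) :=
      ((hcode A hA).comp measurable_fst).prodMk ((hcode B hB).comp measurable_snd)
    have := aux_lintegral_fin (μ.prod μ) _ hp G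
    simp only [G, hF] at this
    rw [this]
    refine Finset.sum_congr rfl fun q _ => ?_
    rw [← Measure.prod_prod]
    congr 2
    ext ω
    simp [Prod.ext_iff]
  have hGs : ∀ n : ℕ, ∫⁻ z, G (code A (S (n ^ k) z), code B z) ∂μ =
      ∑ q, G q * μ ((⇑T)^[n ^ k] '' (code A ⁻¹' {q.1}) ∩ code B ⁻¹' {q.2}) := by
    intro n
    have hp : Measurable (fun z : X => (code A (S (n ^ k) z), code B z)) :=
      ((hcode A hA).comp (hSm _)).prodMk (hcode B hB)
    rw [aux_lintegral_fin μ _ hp G]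
    refine Finset.sum_congr rfl fun q _ => ?_
    rw [himg]
    congr 2
    ext ω
    simp [Prod.ext_iff]
  have hlim : limsup (fun n : ℕ => ∫⁻ z, G (code A (S (n ^ k) z), code B z) ∂μ) atTop < ε := by
    refine lt_of_le_of_lt ?_ hJlt
    simp only [hGs]
    refine (aux_limsup_sum Finset.univ G
      (fun q => ENNReal.ofReal K * (μ (code A ⁻¹' {q.1}) * μ (code B ⁻¹' {q.2})))
      (fun q => enorm_ne_top) _ (fun q => hbound _ _ (hcode A hA (measurableSet_singleton _))
        (hcode B hB (measurableSet_singleton _)))).trans ?_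
    rw [hGprod, Finset.mul_sum]
    exact (Finset.sum_congr rfl fun q _ => by ring).le
  filter_upwards [eventually_lt_of_limsup_lt hlim] with n hn
  refine lt_of_le_of_lt ?_ hn
  have hQ : MeasurableSet ((⇑T)^[n ^ k] '' A ∩ B) := by
    rw [himg]
    exact (hSm _ hA).inter hB
  have hFz : ∀ z, F (code A (S (n ^ k) z), code B z) =
      auxAvg T ((⇑T)^[n ^ k] '' A ∩ B) J z := by
    intro z
    simp only [F, auxAvg, code]
    rw [Finset.sum_range]
    congr 1
    refine Finset.sum_congr rfl fun j _ => ?_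
    rw [himg]
    simp [Set.indicator, hcomm]
  have hintegral : ∫ z, (auxAvg T ((⇑T)^[n ^ k] '' A ∩ B) J z - c) ∂μ =
      (μ ((⇑T)^[n ^ k] '' A ∩ B)).toReal - c := by
    rw [integral_sub (auxAvg_integrable hT.measurable hQ J) (integrable_const _),
      auxAvg_integral hT hQ J hJ]
    simp [measureReal_def]
  rw [edist_eq_enorm_sub, ← hintegral]
  simp only [G, hFz]
  exact enorm_integral_le_lintegral_enorm _
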